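/- Let N ≥ 2 be an integer and let k > 0, α > 0, R > 0 be real numbers. There exists a constant C > 0, depending only on k, α, N and R, such that for every x ∈ ℝ^N with ‖x‖ ≤ R and every r with 0 < r < R, ∫_{E_B^r} exp(−(‖y‖ − ‖x‖)²/2) · w_B(y,α)^{2k} dy ≤ C · r^{2k·min(1,α)+1}. -/

import Mathlib

/-!
Let `m = min 1 α`. On the set of integration some quantity `t ∈ (0, r]` is small: the first
coordinate or a difference `y j - y i` of consecutive coordinates. The weight contains the factor
`t ^ α` or `t`, which is at most `r ^ m` times a power of `exp ‖y‖`, and all its other factors are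
bounded by powers of `exp ‖y‖`. Hence `wB α y ≤ r ^ m * exp (M * ‖y‖)` (`wB_le`), and after raising
to the power `2 * k` the exponential is absorbed by the Gaussian (`exponent_bound`): the integrand
is at most `const * r ^ (2 * k * m) * exp (-‖y‖ ^ 2 / 8)`.

The remaining power of `r` comes from the measure of the set. It is covered by finitely many slabs,
in each of which one coordinate lies in an interval of length `r` determined by the others.
Integrating that coordinate first bounds the Gaussian integral over the slab by `r` times the
total Gaussian integral in one dimension less (`slice_le`).
-/

open MeasureTheory Real Finset

noncomputable section

/-- The type-B weight `w_B(y,α) = ∏_l y_l^α · ∏_{i<j} (y_j² - y_i²)`. -/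
def wB {N : ℕ} (α : ℝ) (y : EuclideanSpace ℝ (Fin N)) : ℝ :=
  (∏ l : Fin N, y l ^ α) * ∏ i : Fin N, ∏ j ∈ Finset.Ioi i, (y j ^ 2 - y i ^ 2)

/-- In a product, an extra factor `ε` gained at one index survives in the whole product. -/
theorem prod_le_mul_prod {ι : Type*} [DecidableEq ι] (s : Finset ι) (f b : ι → ℝ) (ε : ℝ) (l₀ : ι)
    (hl₀ : l₀ ∈ s) (hf : ∀ l ∈ s, 0 ≤ f l) (hb : ∀ l ∈ s, f l ≤ b l) (h : f l₀ ≤ ε * b l₀) :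
    ∏ l ∈ s, f l ≤ ε * ∏ l ∈ s, b l := by
  calc ∏ l ∈ s, f l ≤ ∏ l ∈ s, (if l = l₀ then ε else 1) * b l := by
        refine Finset.prod_le_prod hf fun l hl => ?_
        split_ifs with hh
        · rw [hh]; exact h
        · rw [one_mul]; exact hb l hl
    _ = ε * ∏ l ∈ s, b l := by
        rw [Finset.prod_mul_distrib, Finset.prod_ite_eq' s l₀ (fun _ => ε), if_pos hl₀]

/-- A small quantity `t ≤ r` bounded by `E ≥ 1` satisfies `t ^ a ≤ r ^ m * E ^ a` when `m ≤ a`. -/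
theorem rpow_split {t r E m a : ℝ} (ht : 0 < t) (htr : t ≤ r) (htE : t ≤ E) (hE : 1 ≤ E)
    (hm : 0 ≤ m) (hma : m ≤ a) : t ^ a ≤ r ^ m * E ^ a := by
  have h1 : t ^ a = t ^ m * t ^ (a - m) := by rw [← Real.rpow_add ht]; congr 1; ring
  rw [h1]
  refine mul_le_mul (Real.rpow_le_rpow ht.le htr hm) ?_ (by positivity)
    (Real.rpow_nonneg (ht.le.trans htr) _)
  exact (Real.rpow_le_rpow ht.le htE (by linarith)).trans
    (Real.rpow_le_rpow_of_exponent_le hE (by linarith))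

theorem wB_nonneg {N : ℕ} (α : ℝ) (y : EuclideanSpace ℝ (Fin N)) (hpos : ∀ l, 0 < y l)
    (hmono : StrictMono y) : 0 ≤ wB α y := by
  unfold wB
  refine mul_nonneg (Finset.prod_nonneg fun l _ => Real.rpow_nonneg (hpos l).le _)
    (Finset.prod_nonneg fun i _ => Finset.prod_nonneg fun j hj => ?_)
  have := hmono (Finset.mem_Ioi.1 hj)
  have := hpos i
  nlinarith

/-- Near a wall of the chamber the weight is at most `r ^ min 1 α` times an exponential of the
norm. The factor of the weight vanishing on that wall supplies the power of `r`, and every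
factor is at most `exp (α * ‖y‖)` or `exp (3 * ‖y‖)`. -/
theorem wB_le {N : ℕ} (α r : ℝ) (hα : 0 < α) (hr : 0 < r)
    (y : EuclideanSpace ℝ (Fin N)) (hpos : ∀ l, 0 < y l) (hmono : StrictMono y)
    (h : (∃ l, y l ≤ r) ∨ ∃ i j : Fin N, i < j ∧ y j - y i ≤ r) :
    wB α y ≤ r ^ min 1 α *
      Real.exp (‖y‖ * (α * N + 3 * ∑ i : Fin N, ((Finset.Ioi i).card : ℝ))) := by
  set s := ‖y‖ with hs
  have hs0 : 0 ≤ s := norm_nonneg _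
  have hys : ∀ l, y l ≤ s := fun l =>
    (le_abs_self _).trans (by simpa [hs] using EuclideanSpace.norm_eq y ▸ PiLp.norm_apply_le y l)
  have hsE : s ≤ Real.exp s := by linarith [Real.add_one_le_exp s]
  have hE1 : 1 ≤ Real.exp s := Real.one_le_exp hs0
  have hm0 : 0 ≤ min 1 α := le_min zero_le_one hα.le
  have hf1 : ∀ l ∈ Finset.univ, (0 : ℝ) ≤ y l ^ α := fun l _ => Real.rpow_nonneg (hpos l).le _
  have hb1 : ∀ l ∈ Finset.univ, y l ^ α ≤ Real.exp s ^ α := fun l _ =>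
    Real.rpow_le_rpow (hpos l).le ((hys l).trans hsE) hα.le
  have hf2 : ∀ i j : Fin N, j ∈ Finset.Ioi i → 0 ≤ y j ^ 2 - y i ^ 2 := fun i j hj => by
    have := hmono (Finset.mem_Ioi.1 hj)
    have := hpos i
    nlinarith
  have hb2 : ∀ i j : Fin N, j ∈ Finset.Ioi i → y j ^ 2 - y i ^ 2 ≤ Real.exp s ^ 3 :=
    fun i j _ => by
      have h1 : y j ^ 2 ≤ Real.exp s ^ 2 :=
        pow_le_pow_left₀ (hpos j).le ((hys j).trans hsE) 2
      have h2 : Real.exp s ^ 2 ≤ Real.exp s ^ 3 := pow_le_pow_right₀ hE1 (by norm_num)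
      nlinarith [sq_nonneg (y i)]
  have hf2' : ∀ i ∈ (Finset.univ : Finset (Fin N)),
      0 ≤ ∏ j ∈ Finset.Ioi i, (y j ^ 2 - y i ^ 2) := fun i _ => Finset.prod_nonneg (hf2 i)
  have hb2' : ∀ i ∈ (Finset.univ : Finset (Fin N)),
      ∏ j ∈ Finset.Ioi i, (y j ^ 2 - y i ^ 2) ≤ ∏ j ∈ Finset.Ioi i, Real.exp s ^ 3 :=
    fun i _ => Finset.prod_le_prod (hf2 i) (hb2 i)
  have key : wB α y ≤ r ^ min 1 α * ((∏ l : Fin N, Real.exp s ^ α) *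
      ∏ i : Fin N, ∏ j ∈ Finset.Ioi i, Real.exp s ^ 3) := by
    unfold wB
    rcases h with ⟨l, hl⟩ | ⟨i, j, hij, hl⟩
    · rw [← mul_assoc]
      refine mul_le_mul ?_ (Finset.prod_le_prod hf2' hb2') (Finset.prod_nonneg hf2')
        (by positivity)
      exact prod_le_mul_prod _ _ _ _ l (Finset.mem_univ _) hf1 hb1
        (rpow_split (hpos l) hl ((hys l).trans hsE) hE1 hm0 (min_le_right _ _))
    · rw [mul_left_comm]
      refine mul_le_mul (Finset.prod_le_prod hf1 hb1) ?_ (Finset.prod_nonneg hf2')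
        (by positivity)
      refine prod_le_mul_prod _ _ _ _ i (Finset.mem_univ _) hf2' hb2' ?_
      refine prod_le_mul_prod _ _ _ _ j (Finset.mem_Ioi.2 hij) (hf2 i) (hb2 i) ?_
      have hd := hmono hij
      have h1 := rpow_split (t := y j - y i) (a := 1) (sub_pos.2 hd) hl
        (by linarith [hpos i, hys j]) hE1 hm0 (min_le_left 1 α)
      simp only [Real.rpow_one] at h1
      have h2 : y j + y i ≤ Real.exp s ^ 2 := by
        rw [← Real.exp_nat_mul]
        push_cast
        linarith [Real.add_one_le_exp (2 * s), hys i, hys j]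
      calc y j ^ 2 - y i ^ 2 = (y j - y i) * (y j + y i) := by ring
        _ ≤ (r ^ min 1 α * Real.exp s) * Real.exp s ^ 2 :=
            mul_le_mul h1 h2 (by linarith [hpos i, hpos j]) (by positivity)
        _ = _ := by ring
  refine key.trans (le_of_eq ?_)
  congr 1
  simp only [Finset.prod_const, ← Real.exp_mul, ← Real.exp_nat_mul, ← Real.exp_sum,
    Finset.card_univ, Fintype.card_fin, ← Real.exp_add]
  congr 1
  rw [mul_add, Finset.mul_sum, Finset.mul_sum]
  congr 1
  · ring
  · refine Finset.sum_congr rfl fun i _ => ?_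
    push_cast
    ring

/-- The Gaussian weight absorbs any exponential of the norm, uniformly for `0 ≤ b ≤ R`. -/
theorem exponent_bound (s b a R : ℝ) (hb0 : 0 ≤ b) (hb : b ≤ R) :
    -(s - b) ^ 2 / 2 + a * s ≤ (R ^ 2 / 2 + 2 * a ^ 2) + -(1 / 8) * s ^ 2 := by
  nlinarith [sq_nonneg (s - 2 * b), sq_nonneg (s - 4 * a), mul_le_mul hb hb hb0 (hb0.trans hb)]

/-- Integrating first in the coordinate `j`, which ranges over an interval of length `r`
determined by the other coordinates, gives a factor `r`. -/
theorem slice_le {n : ℕ} (j : Fin (n + 1)) (c : (Fin n → ℝ) → ℝ) (hc : Measurable c) (r : ℝ) :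
    ∫⁻ y in {y : Fin (n + 1) → ℝ |
        c (j.removeNth y) ≤ y j ∧ y j ≤ c (j.removeNth y) + r},
      ENNReal.ofReal (∏ l, Real.exp (-(1 / 8) * y l ^ 2)) ≤
    ENNReal.ofReal r * ∫⁻ z : Fin n → ℝ, ENNReal.ofReal (∏ l, Real.exp (-(1 / 8) * z l ^ 2)) := by
  have hmp := volume_preserving_piFinSuccAbove (fun _ : Fin (n + 1) => ℝ) j
  set S : Set (ℝ × (Fin n → ℝ)) := {p | c p.2 ≤ p.1 ∧ p.1 ≤ c p.2 + r} with hS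
  have hSm : MeasurableSet S :=
    (measurableSet_le (hc.comp measurable_snd) measurable_fst).inter
      (measurableSet_le measurable_fst ((hc.comp measurable_snd).add_const r))
  set g : (Fin n → ℝ) → ENNReal := fun z => ENNReal.ofReal (∏ l, Real.exp (-(1 / 8) * z l ^ 2))
    with hg
  have hgm : Measurable g := by fun_prop
  have hind : Measurable (S.indicator fun p => g p.2) :=
    (hgm.comp measurable_snd).indicator hSm
  calc _ ≤ ∫⁻ y in (MeasurableEquiv.piFinSuccAbove (fun _ : Fin (n + 1) => ℝ) j) ⁻¹' S,
          (fun p : ℝ × (Fin n → ℝ) => g p.2)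
            (MeasurableEquiv.piFinSuccAbove (fun _ : Fin (n + 1) => ℝ) j y) := by
        refine lintegral_mono fun y => ENNReal.ofReal_le_ofReal ?_
        rw [Fin.prod_univ_succAbove _ j]
        refine mul_le_of_le_one_left (by positivity) (Real.exp_le_one_iff.2 ?_)
        nlinarith [sq_nonneg (y j)]
    _ = ∫⁻ p in S, g p.2 :=
        hmp.setLIntegral_comp_preimage_emb (MeasurableEquiv.measurableEmbedding _)
          (fun p : ℝ × (Fin n → ℝ) => g p.2) S
    _ = ∫⁻ p, S.indicator (fun p => g p.2) p := (lintegral_indicator hSm _).symm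
    _ = ∫⁻ z, ∫⁻ t, S.indicator (fun p => g p.2) (t, z) := by
        rw [Measure.volume_eq_prod, lintegral_prod_symm _ hind.aemeasurable]
    _ = ∫⁻ z, ENNReal.ofReal r * g z := by
        refine lintegral_congr fun z => ?_
        have : (fun t => S.indicator (fun p => g p.2) (t, z)) =
            (Set.Icc (c z) (c z + r)).indicator fun _ => g z := by
          ext t; rfl
        rw [this, lintegral_indicator measurableSet_Icc, setLIntegral_const, Real.volume_Icc,
          add_sub_cancel_left, mul_comm]
    _ = _ := lintegral_const_mul _ hgm

theorem gauss_lintegral_lt_top (n : ℕ) :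
    ∫⁻ z : Fin n → ℝ, ENNReal.ofReal (∏ l, Real.exp (-(1 / 8) * z l ^ 2)) < ⊤ := by
  have : Integrable (fun z : Fin n → ℝ => ∏ l, Real.exp (-(1 / 8) * z l ^ 2)) :=
    Integrable.fintype_prod (f := fun _ t => Real.exp (-(1 / 8) * t ^ 2))
      (fun _ => integrable_exp_neg_mul_sq (by norm_num))
  exact this.lintegral_lt_top

/-- `slice_le` on Euclidean space, with the Gaussian written through the Euclidean norm. -/
theorem euclid_slice_le {n : ℕ} (j : Fin (n + 1)) (c : (Fin n → ℝ) → ℝ) (hc : Measurable c)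
    (r : ℝ) :
    ∫⁻ y in {y : EuclideanSpace ℝ (Fin (n + 1)) |
        c (j.removeNth (WithLp.ofLp y)) ≤ y j ∧ y j ≤ c (j.removeNth (WithLp.ofLp y)) + r},
      ENNReal.ofReal (Real.exp (-(1 / 8) * ‖y‖ ^ 2)) ≤
    ENNReal.ofReal r * ∫⁻ z : Fin n → ℝ, ENNReal.ofReal (∏ l, Real.exp (-(1 / 8) * z l ^ 2)) := by
  refine le_trans (le_of_eq ?_) (slice_le j c hc r)
  rw [← (EuclideanSpace.volume_preserving_symm_measurableEquiv_toLp
    (Fin (n + 1))).setLIntegral_comp_preimage_emb (MeasurableEquiv.measurableEmbedding _)]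
  refine lintegral_congr fun y => ?_
  rw [EuclideanSpace.real_norm_sq_eq, Finset.mul_sum, Real.exp_sum]
  rfl

theorem stmt19 (N : ℕ) (hN : 2 ≤ N) (k α R : ℝ) (hk : 0 < k) (hα : 0 < α) (hR : 0 < R) :
    ∃ C : ℝ, 0 < C ∧ ∀ (x : EuclideanSpace ℝ (Fin N)), ‖x‖ ≤ R → ∀ r : ℝ, 0 < r → r < R →
      (∫⁻ y in {y : EuclideanSpace ℝ (Fin N) | (0 < y ⟨0, by omega⟩ ∧ StrictMono y) ∧
          (y ⟨0, by omega⟩ < r ∨ ∃ i j : Fin N, (j : ℕ) = (i : ℕ) + 1 ∧ y j - y i ≤ r)},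
        ENNReal.ofReal (Real.exp (-(‖y‖ - ‖x‖) ^ 2 / 2) * wB α y ^ (2 * k)))
        ≤ ENNReal.ofReal (C * r ^ (2 * k * min 1 α + 1)) := by
  obtain ⟨n, rfl⟩ : ∃ n, N = n + 1 := ⟨N - 1, by omega⟩
  set J : ENNReal := ∫⁻ z : Fin n → ℝ, ENNReal.ofReal (∏ l, Real.exp (-(1 / 8) * z l ^ 2)) with hJ
  have hJtop : J ≠ ⊤ := (gauss_lintegral_lt_top n).ne
  set M : ℝ := α * (n + 1 : ℕ) + 3 * ∑ i : Fin (n + 1), ((Finset.Ioi i).card : ℝ) with hM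
  set A : ℝ := R ^ 2 / 2 + 2 * (2 * k * M) ^ 2 with hA
  set q : ℝ := 1 + (n + 1) * (n + 1) with hq
  have hq0 : 0 < q := by positivity
  refine ⟨Real.exp A * q * (J.toReal + 1), by positivity, fun x hx r hr hrR => ?_⟩
  set G : EuclideanSpace ℝ (Fin (n + 1)) → ENNReal :=
    fun y => ENNReal.ofReal (Real.exp (-(1 / 8) * ‖y‖ ^ 2)) with hG
  have hGm : Measurable G := by fun_prop
  set S := {y : EuclideanSpace ℝ (Fin (n + 1)) | (0 < y ⟨0, by omega⟩ ∧ StrictMono y) ∧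
    (y ⟨0, by omega⟩ < r ∨ ∃ i j : Fin (n + 1), (j : ℕ) = (i : ℕ) + 1 ∧ y j - y i ≤ r)} with hS
  have hSpos : ∀ y ∈ S, ∀ l, 0 < y l := fun y hy l =>
    hy.1.1.trans_le (hy.1.2.monotone (Fin.zero_le l))
  have hm0 : 0 ≤ min 1 α := le_min zero_le_one hα.le
  have hpt : ∀ y ∈ S, ENNReal.ofReal (Real.exp (-(‖y‖ - ‖x‖) ^ 2 / 2) * wB α y ^ (2 * k)) ≤
      ENNReal.ofReal (Real.exp A * r ^ (2 * k * min 1 α)) * G y := by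
    intro y hy
    rw [hG, ← ENNReal.ofReal_mul (by positivity)]
    refine ENNReal.ofReal_le_ofReal ?_
    have hw := wB_le α r hα hr y (hSpos y hy) hy.1.2 (by
      rcases hy.2 with h | ⟨i, j, hij, h⟩
      · exact Or.inl ⟨_, h.le⟩
      · exact Or.inr ⟨i, j, by rw [Fin.lt_def]; omega, h⟩)
    rw [← hM] at hw
    have hw2 : wB α y ^ (2 * k) ≤ r ^ (2 * k * min 1 α) * Real.exp (2 * k * M * ‖y‖) := by
      refine (Real.rpow_le_rpow (wB_nonneg α y (hSpos y hy) hy.1.2) hw (by positivity)).trans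
        (le_of_eq ?_)
      rw [Real.mul_rpow (by positivity) (by positivity), ← Real.rpow_mul hr.le, ← Real.exp_mul]
      congr 2 <;> ring
    calc _ ≤ Real.exp (-(‖y‖ - ‖x‖) ^ 2 / 2) *
          (r ^ (2 * k * min 1 α) * Real.exp (2 * k * M * ‖y‖)) := by gcongr
      _ = r ^ (2 * k * min 1 α) * Real.exp (-(‖y‖ - ‖x‖) ^ 2 / 2 + 2 * k * M * ‖y‖) := by
          rw [Real.exp_add]; ring
      _ ≤ r ^ (2 * k * min 1 α) * Real.exp (A + -(1 / 8) * ‖y‖ ^ 2) := by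
          exact mul_le_mul_of_nonneg_left
            (Real.exp_le_exp.2 (exponent_bound _ _ _ _ (norm_nonneg x) hx)) (by positivity)
      _ = _ := by rw [Real.exp_add]; ring
  set S₀ := {y : EuclideanSpace ℝ (Fin (n + 1)) | 0 ≤ y 0 ∧ y 0 ≤ 0 + r} with hS₀
  set T : Fin (n + 1) × Fin (n + 1) → Set (EuclideanSpace ℝ (Fin (n + 1))) :=
    fun p => {y | p.1 ≠ p.2 ∧ y p.1 ≤ y p.2 ∧ y p.2 ≤ y p.1 + r} with hT
  have hsub : S ⊆ S₀ ∪ ⋃ p, T p := by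
    intro y hy
    rcases hy.2 with h | ⟨i, j, hij, h⟩
    · exact Or.inl ⟨(hSpos y hy 0).le, by rw [zero_add]; exact h.le⟩
    · have hlt : i < j := by rw [Fin.lt_def]; omega
      exact Or.inr (Set.mem_iUnion.2 ⟨(i, j), hlt.ne, (hy.1.2 hlt).le, by linarith⟩)
  have h0 : ∫⁻ y in S₀, G y ≤ ENNReal.ofReal r * J :=
    euclid_slice_le 0 (fun _ => 0) measurable_const r
  have hTp : ∀ p, ∫⁻ y in T p, G y ≤ ENNReal.ofReal r * J := by
    rintro ⟨i, j⟩
    by_cases hij : i = j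
    · simp [hT, hij]
    · obtain ⟨i', rfl⟩ := Fin.exists_succAbove_eq hij
      refine le_trans (lintegral_mono_set fun y hy => ?_)
        (euclid_slice_le j (fun z => z i') (measurable_pi_apply i') r)
      exact hy.2
  have hint : ∫⁻ y in S, G y ≤ ENNReal.ofReal q * (ENNReal.ofReal r * J) := by
    calc ∫⁻ y in S, G y ≤ ∫⁻ y in S₀ ∪ ⋃ p, T p, G y := lintegral_mono_set hsub
      _ ≤ (∫⁻ y in S₀, G y) + ∫⁻ y in ⋃ p, T p, G y := lintegral_union_le _ _ _
      _ ≤ ENNReal.ofReal r * J + ∑ p : Fin (n + 1) × Fin (n + 1), ENNReal.ofReal r * J := by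
          refine add_le_add h0 ((lintegral_iUnion_le _ _).trans ?_)
          rw [tsum_fintype]
          exact Finset.sum_le_sum fun p _ => hTp p
      _ = ENNReal.ofReal q * (ENNReal.ofReal r * J) := by
          have : ENNReal.ofReal q = 1 + (n + 1) * (n + 1) := by
            rw [hq, show (1 + ((n : ℝ) + 1) * (n + 1)) = ((1 + (n + 1) * (n + 1) : ℕ) : ℝ) by
              push_cast; ring, ENNReal.ofReal_natCast]
            push_cast
            ring
          rw [this, Finset.sum_const, nsmul_eq_mul, Finset.card_univ, Fintype.card_prod,
            Fintype.card_fin]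
          push_cast
          ring
  calc _ ≤ ∫⁻ y in S, ENNReal.ofReal (Real.exp A * r ^ (2 * k * min 1 α)) * G y :=
        setLIntegral_mono (hGm.const_mul _) hpt
    _ = ENNReal.ofReal (Real.exp A * r ^ (2 * k * min 1 α)) * ∫⁻ y in S, G y :=
        lintegral_const_mul _ hGm
    _ ≤ ENNReal.ofReal (Real.exp A * r ^ (2 * k * min 1 α)) *
          (ENNReal.ofReal q * (ENNReal.ofReal r * ENNReal.ofReal (J.toReal + 1))) := by
        have hJle : J ≤ ENNReal.ofReal (J.toReal + 1) := by
          rw [← ENNReal.ofReal_toReal hJtop]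
          refine ENNReal.ofReal_le_ofReal ?_
          rw [ENNReal.ofReal_toReal hJtop]
          linarith
        gcongr
        exact hint.trans (by gcongr)
    _ = _ := by
        rw [← ENNReal.ofReal_mul hr.le, ← ENNReal.ofReal_mul hq0.le,
          ← ENNReal.ofReal_mul (by positivity), Real.rpow_add_one hr.ne']
        congr 1
        ring
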